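/- Let f be a constraint of arity k ≥ 3. If R_f admits a good factor list, then there exists a constraint h in COMP_1(f) ∪ COMP_2(f) such that R_h admits a good factor list. -/

import Mathlib

/-- A (complex-valued Boolean) constraint of arity `k`. -/
abbrev Constraint (k : ℕ) : Type := (Fin k → Bool) → ℂ

/-- The binary equality constraint `EQ = [1,0,1]`, as a two-argument function. -/
def EQc : Bool → Bool → ℂ := fun a b => if a = b then 1 else 0

/-- The binary disequality constraint `XOR = [0,1,0]`, as a two-argument function. -/
def XORc : Bool → Bool → ℂ := fun a b => if a = b then 0 else 1

/-- The binary constraint `Implies = (1,1,0,1)`, as a two-argument function. -/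
def IMPc : Bool → Bool → ℂ := fun a b => if a = true ∧ b = false then 0 else 1

/-- The unary constraint `[a, b]` (value `a` on input `0`, value `b` on input `1`). -/
def unC (a b : ℂ) : Constraint 1 := fun x => if x 0 then b else a

/-- The binary constraint `(a,b,c,d) = (f(0,0), f(0,1), f(1,0), f(1,1))`. -/
def binC (a b c d : ℂ) : Constraint 2 := fun x =>
  if x 0 then (if x 1 then d else c) else (if x 1 then b else a)

/-- `OR = [0,1,1]`. -/
def ORc : Constraint 2 := binC 0 1 1 1

/-- `Implies = (1,1,0,1)` as a binary constraint. -/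
def Impliesc : Constraint 2 := binC 1 1 0 1

/-- Membership in `NZ`: the constraint is everywhere nonzero. -/
def inNZ {k : ℕ} (f : Constraint k) : Prop := ∀ x, f x ≠ 0

/-- Membership in `DG`: the constraint is a product of unary constraints, one per variable. -/
def inDG {k : ℕ} (f : Constraint k) : Prop :=
  ∃ g : Fin k → Bool → ℂ, ∀ x, f x = ∏ i, g i (x i)

/-- Membership in `ED`: the constraint is a product of at least one factor, each factor
being a unary constraint applied to some variable, or `EQ`/`XOR` applied to two variables. -/
def inED {k : ℕ} (f : Constraint k) : Prop :=
  ∃ (l1 l2 : ℕ) (h : Fin l1 → Bool → ℂ) (j : Fin l1 → Fin k)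
    (g : Fin l2 → Bool → Bool → ℂ) (m n : Fin l2 → Fin k),
    1 ≤ l1 + l2 ∧ (∀ i, g i = EQc ∨ g i = XORc) ∧
    ∀ x, f x = (∏ i, h i (x (j i))) * ∏ i, g i (x (m i)) (x (n i))

/-- Membership in `IM`: `f ∉ NZ` and `f` is a product of at least one factor, each factor
being a unary constraint applied to some variable, or `Implies` applied to two variables. -/
def inIM {k : ℕ} (f : Constraint k) : Prop :=
  ¬ inNZ f ∧
  ∃ (l1 l2 : ℕ) (h : Fin l1 → Bool → ℂ) (j : Fin l1 → Fin k)
    (m n : Fin l2 → Fin k),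
    1 ≤ l1 + l2 ∧
    ∀ x, f x = (∏ i, h i (x (j i))) * ∏ i, IMPc (x (m i)) (x (n i))

/-- The underlying relation `R_f = {x : f x ≠ 0}` of a constraint `f`. -/
def relOf {k : ℕ} (f : Constraint k) : Set (Fin k → Bool) := {x | f x ≠ 0}

/-- Factors allowed in an IMP-style factorization of a relation:
`Δ_c(x_i)` or `Implies(x_i, x_j)`. -/
inductive ImpFactor (k : ℕ) where
  | delta (c : Bool) (i : Fin k)
  | imp (i j : Fin k)
deriving DecidableEq

/-- Evaluation of an IMP-factor at an assignment. -/
def ImpFactor.eval {k : ℕ} : ImpFactor k → (Fin k → Bool) → Bool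
  | .delta c i, x => x i == c
  | .imp i j, x => !(x i) || x j

/-- `L` is a factor list for the relation `R`: the conjunction of the factors in `L` equals `R`. -/
def isFactorListFor {k : ℕ} (L : List (ImpFactor k)) (R : Set (Fin k → Bool)) : Prop :=
  ∀ x, x ∈ R ↔ ∀ fac ∈ L, fac.eval x = true

/-- Membership in `IMP`: the relation is the conjunction of a positive number of factors of the
forms `Δ_0(x)`, `Δ_1(x)`, `Implies(x,y)`. -/
def inIMP {k : ℕ} (R : Set (Fin k → Bool)) : Prop :=
  ∃ L : List (ImpFactor k), L ≠ [] ∧ isFactorListFor L R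

/-- `f` has imp support when `R_f ∈ IMP`. -/
def hasImpSupport {k : ℕ} (f : Constraint k) : Prop := inIMP (relOf f)

/-- A factor list is imp-distinctive if no variable occurs both in a `Δ_c` factor and in an
`Implies` factor, and no factor `Implies(x,x)` occurs. -/
def impDistinctive {k : ℕ} (L : List (ImpFactor k)) : Prop :=
  (∀ i : Fin k, ¬ ((∃ c, ImpFactor.delta c i ∈ L) ∧
      (∃ j, ImpFactor.imp i j ∈ L ∨ ImpFactor.imp j i ∈ L))) ∧
  (∀ i : Fin k, ImpFactor.imp i i ∉ L)

/-- Factors of the forms `Δ_c(x_i)` or `EQ(x_i,x_j)`. -/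
inductive EqFactor (k : ℕ) where
  | delta (c : Bool) (i : Fin k)
  | eq (i j : Fin k)
deriving DecidableEq

/-- Evaluation of such a factor at an assignment. -/
def EqFactor.eval {k : ℕ} : EqFactor k → (Fin k → Bool) → Bool
  | .delta c i, x => x i == c
  | .eq i j, x => x i == x j

/-- `f` is in simple form: its representing Boolean matrix (rows indexed by `R_f`) has
no all-`0` column, no all-`1` column, and no two identical columns. -/
def simpleForm {k : ℕ} (f : Constraint k) : Prop :=
  (∀ i : Fin k, ∃ a, f a ≠ 0 ∧ a i = true) ∧
  (∀ i : Fin k, ∃ a, f a ≠ 0 ∧ a i = false) ∧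
  (∀ i j : Fin k, i ≠ j → ∃ a, f a ≠ 0 ∧ a i ≠ a j)

/-- A constraint of unspecified arity. -/
abbrev Ctr : Type := Σ k : ℕ, Constraint k

/-- T-constructibility of a constraint from a set `G` of constraints, by finitely many
applications of permutation, pinning, projection, linking, expansion, multiplication,
and normalization. -/
inductive TCon (G : Set Ctr) : Ctr → Prop where
  | base {c : Ctr} : c ∈ G → TCon G c
  | perm {k : ℕ} {g : Constraint k} (σ : Equiv.Perm (Fin k)) :
      TCon G ⟨k, g⟩ → TCon G ⟨k, fun x => g (fun i => x (σ i))⟩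
  | pinning {k : ℕ} {g : Constraint (k+1)} (i : Fin (k+1)) (c : Bool) :
      TCon G ⟨k+1, g⟩ → TCon G ⟨k, fun x => g (i.insertNth c x)⟩
  | proj {k : ℕ} {g : Constraint (k+1)} (i : Fin (k+1)) :
      TCon G ⟨k+1, g⟩ →
      TCon G ⟨k, fun x => g (i.insertNth false x) + g (i.insertNth true x)⟩
  | link {k : ℕ} {g : Constraint (k+1)} (i : Fin (k+1)) (j : Fin k) :
      TCon G ⟨k+1, g⟩ → TCon G ⟨k, fun x => g (i.insertNth (x j) x)⟩
  | expand {k : ℕ} {g : Constraint k} (i : Fin (k+1)) :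
      TCon G ⟨k, g⟩ → TCon G ⟨k+1, fun x => g (fun j => x (i.succAbove j))⟩
  | mul {k : ℕ} {g₁ g₂ : Constraint k} :
      TCon G ⟨k, g₁⟩ → TCon G ⟨k, g₂⟩ → TCon G ⟨k, fun x => g₁ x * g₂ x⟩
  | norm {k : ℕ} {g : Constraint k} (lam : ℂ) (hlam : lam ≠ 0) :
      TCon G ⟨k, g⟩ → TCon G ⟨k, fun x => lam * g x⟩

/-- T-constructibility using no projection operation. -/
inductive TConNoProj (G : Set Ctr) : Ctr → Prop where
  | base {c : Ctr} : c ∈ G → TConNoProj G c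
  | perm {k : ℕ} {g : Constraint k} (σ : Equiv.Perm (Fin k)) :
      TConNoProj G ⟨k, g⟩ → TConNoProj G ⟨k, fun x => g (fun i => x (σ i))⟩
  | pinning {k : ℕ} {g : Constraint (k+1)} (i : Fin (k+1)) (c : Bool) :
      TConNoProj G ⟨k+1, g⟩ → TConNoProj G ⟨k, fun x => g (i.insertNth c x)⟩
  | link {k : ℕ} {g : Constraint (k+1)} (i : Fin (k+1)) (j : Fin k) :
      TConNoProj G ⟨k+1, g⟩ → TConNoProj G ⟨k, fun x => g (i.insertNth (x j) x)⟩
  | expand {k : ℕ} {g : Constraint k} (i : Fin (k+1)) :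
      TConNoProj G ⟨k, g⟩ → TConNoProj G ⟨k+1, fun x => g (fun j => x (i.succAbove j))⟩
  | mul {k : ℕ} {g₁ g₂ : Constraint k} :
      TConNoProj G ⟨k, g₁⟩ → TConNoProj G ⟨k, g₂⟩ →
      TConNoProj G ⟨k, fun x => g₁ x * g₂ x⟩
  | norm {k : ℕ} {g : Constraint k} (lam : ℂ) (hlam : lam ≠ 0) :
      TConNoProj G ⟨k, g⟩ → TConNoProj G ⟨k, fun x => lam * g x⟩

/-- Pinning the `i`-th variable of `f` to the bit `c`. -/
def pinC {k : ℕ} (f : Constraint (k+1)) (i : Fin (k+1)) (c : Bool) : Constraint k :=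
  fun x => f (i.insertNth c x)

/-- `R_f` admits a good factor list: a factor list consisting only of `Implies` factors,
in which every variable is incident to at least one edge of the induced imp graph,
and whose imp graph has no (directed) cycle. -/
def hasGoodFactorList {k : ℕ} (f : Constraint k) : Prop :=
  ∃ L : List (ImpFactor k),
    isFactorListFor L (relOf f) ∧
    (∀ fac ∈ L, ∃ i j, fac = ImpFactor.imp i j) ∧
    (∀ i : Fin k, ∃ j, ImpFactor.imp i j ∈ L ∨ ImpFactor.imp j i ∈ L) ∧
    ¬ ∃ i : Fin k, Relation.TransGen (fun a b => ImpFactor.imp a b ∈ L) i i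

/-!
Read `Implies(x_i, x_j)` as an edge from `i` to `j`. Pinning a source to `0` or a sink to `1`
satisfies every factor at that vertex, so it deletes the vertex from the imp graph, which stays
acyclic; only the absence of isolated vertices can be lost. Let `v` be a source, which exists since
the graph is finite and acyclic. If deleting `v` isolates a vertex `u`, then `v` is the only
neighbour of `u`, so `u` is a sink. If `v` has a neighbour other than `u`, deleting `u` alone
isolates nothing; otherwise `{u, v}` is a connected component, and deleting both isolates nothing.
-/

section Digraph

variable {α β : Type*} {r : α → α → Prop}

/-- The subgraph that the digraph `r` induces on `s` has no isolated vertex. A vertex whose only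
edge is a loop does not count as isolated, as in the definition of a good factor list. -/
def NoIsolatedOn (r : α → α → Prop) (s : Set α) : Prop :=
  ∀ a ∈ s, ∃ b ∈ s, Relation.SymmGen r a b

/-- The vertex `v` is a source and `c = 0`, or `v` is a sink and `c = 1`. Pinning `x_v` to `c` then
satisfies `Implies` on each edge at `v`, whatever values the other variables take. -/
def SatisfiesEdgesAt (r : α → α → Prop) (v : α) (c : Bool) : Prop :=
  (∀ a, r v a → c = false) ∧ ∀ a, r a v → c = true

theorem noIsolatedOn_invImage_univ {e : β → α} :
    NoIsolatedOn (InvImage r e) Set.univ ↔ NoIsolatedOn r (Set.range e) := by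
  simp only [NoIsolatedOn, Set.mem_univ, true_and, true_imp_iff, Set.forall_mem_range,
    Set.exists_range_iff]
  rfl

theorem NoIsolatedOn.compl_singleton_or_compl_pair {u v : α} (h : NoIsolatedOn r Set.univ)
    (hu : ∀ b, Relation.SymmGen r u b → b = v) :
    NoIsolatedOn r {u}ᶜ ∨ NoIsolatedOn r {v, u}ᶜ := by
  have ne_u_of_adj {a b : α} (hav : a ≠ v) (hab : Relation.SymmGen r a b) : b ≠ u := by
    rintro rfl
    exact hav (hu a hab.symm)
  by_cases hv : ∃ w ≠ u, Relation.SymmGen r v w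
  · refine .inl fun a _ => ?_
    obtain rfl | hav := eq_or_ne a v
    · exact hv
    · obtain ⟨b, -, hab⟩ := h a trivial
      exact ⟨b, ne_u_of_adj hav hab, hab⟩
  · push Not at hv
    refine .inr fun a ha => ?_
    obtain ⟨hav, hau⟩ : a ≠ v ∧ a ≠ u := by simpa using ha
    obtain ⟨b, -, hab⟩ := h a trivial
    have hbv : b ≠ v := by
      rintro rfl
      exact hv a hau hab.symm
    exact ⟨b, by simp [hbv, ne_u_of_adj hav hab], hab⟩

theorem exists_forall_not_rel_of_irrefl_transGen [Finite α] [Nonempty α]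
    (hr : Std.Irrefl (Relation.TransGen r)) : ∃ v, ∀ a, ¬ r a v := by
  obtain ⟨v, -, hv⟩ := (Finite.wellFounded_of_trans_of_irrefl (Relation.TransGen r)).has_min
    Set.univ Set.univ_nonempty
  exact ⟨v, fun a hav => hv a trivial (.single hav)⟩

theorem NoIsolatedOn.exists_satisfiesEdgesAt_compl [Finite α] [Nonempty α]
    (h : NoIsolatedOn r Set.univ) (hr : Std.Irrefl (Relation.TransGen r)) :
    (∃ v c, SatisfiesEdgesAt r v c ∧ NoIsolatedOn r {v}ᶜ) ∨
      ∃ v c u d, u ≠ v ∧ SatisfiesEdgesAt r v c ∧ SatisfiesEdgesAt r u d ∧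
        NoIsolatedOn r {v, u}ᶜ := by
  obtain ⟨v, hv⟩ := exists_forall_not_rel_of_irrefl_transGen hr
  have hv_pin : SatisfiesEdgesAt r v false := ⟨fun _ _ => rfl, fun a hav => (hv a hav).elim⟩
  by_cases hcompl : NoIsolatedOn r {v}ᶜ
  · exact .inl ⟨v, false, hv_pin, hcompl⟩
  obtain ⟨u, huv, hu⟩ : ∃ u ≠ v, ∀ b, Relation.SymmGen r u b → b = v := by
    simp only [NoIsolatedOn, not_forall, not_exists, not_and] at hcompl
    obtain ⟨u, huv, hu⟩ := hcompl
    exact ⟨u, huv, fun b hub => by_contra fun hbv => hu b hbv hub⟩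
  have hu_sink (b : α) : ¬ r u b := by
    intro hub
    obtain rfl := hu b (.of_rel hub)
    exact hv u hub
  have hu_pin : SatisfiesEdgesAt r u true := ⟨fun b hub => (hu_sink b hub).elim, fun _ _ => rfl⟩
  obtain hcompl_u | hcompl_uv := h.compl_singleton_or_compl_pair hu
  · exact .inl ⟨u, true, hu_pin, hcompl_u⟩
  · exact .inr ⟨v, false, u, true, huv, hv_pin, hu_pin, hcompl_uv⟩

theorem SatisfiesEdgesAt.invImage {e : β → α} {b : β} {c : Bool}
    (h : SatisfiesEdgesAt r (e b) c) : SatisfiesEdgesAt (InvImage r e) b c :=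
  ⟨fun a => h.1 (e a), fun a => h.2 (e a)⟩

theorem irrefl_transGen_invImage (e : β → α) (hr : Std.Irrefl (Relation.TransGen r)) :
    Std.Irrefl (Relation.TransGen (InvImage r e)) :=
  ⟨fun b hb => hr.irrefl (e b) (Relation.TransGen.lift e le_rfl _ _ hb)⟩

end Digraph

section Constraint

variable {k : ℕ}

/-- The digraph `r` is acyclic and the support of `f` is the conjunction of `Implies(x_i, x_j)` over
its edges, written `x i ≤ x j` in the order `false ≤ true`. This is a good factor list with the list
replaced by its imp graph, except that isolated vertices are allowed. -/
structure IsImpDag (r : Fin k → Fin k → Prop) (f : Constraint k) : Prop where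
  irrefl_transGen : Std.Irrefl (Relation.TransGen r)
  mem_relOf_iff (x : Fin k → Bool) : x ∈ relOf f ↔ ∀ i j, r i j → x i ≤ x j

theorem ImpFactor.eval_imp_eq_true {i j : Fin k} {x : Fin k → Bool} :
    (imp i j).eval x = true ↔ x i ≤ x j := by
  simp only [eval]
  cases x i <;> cases x j <;> decide

theorem forall_mem_eval_eq_true_iff {L : List (ImpFactor k)}
    (hL : ∀ fac ∈ L, ∃ i j, fac = ImpFactor.imp i j) {x : Fin k → Bool} :
    (∀ fac ∈ L, fac.eval x = true) ↔ ∀ i j, ImpFactor.imp i j ∈ L → x i ≤ x j := by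
  refine ⟨fun h i j hij => ImpFactor.eval_imp_eq_true.1 (h _ hij), fun h fac hfac => ?_⟩
  obtain ⟨i, j, rfl⟩ := hL fac hfac
  exact ImpFactor.eval_imp_eq_true.2 (h i j hfac)

theorem exists_list_imp_mem_iff (r : Fin k → Fin k → Prop) :
    ∃ L : List (ImpFactor k), (∀ fac ∈ L, ∃ i j, fac = ImpFactor.imp i j) ∧
      ∀ i j, ImpFactor.imp i j ∈ L ↔ r i j := by
  refine ⟨(Set.toFinite {p : Fin k × Fin k | r p.1 p.2}).toFinset.toList.map
    fun p => ImpFactor.imp p.1 p.2, ?_, ?_⟩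
  · simp only [List.forall_mem_map]
    exact fun p _ => ⟨p.1, p.2, rfl⟩
  · simp

theorem hasGoodFactorList_iff {f : Constraint k} :
    hasGoodFactorList f ↔ ∃ r, IsImpDag r f ∧ NoIsolatedOn r Set.univ := by
  constructor
  · rintro ⟨L, hf, himp, hiso, hcycle⟩
    refine ⟨fun i j => ImpFactor.imp i j ∈ L, ⟨⟨fun i hi => hcycle ⟨i, hi⟩⟩, fun x => ?_⟩,
      fun i _ => (hiso i).imp fun j hj => ⟨trivial, hj⟩⟩
    rw [hf x, forall_mem_eval_eq_true_iff himp]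
  · rintro ⟨r, hf, hiso⟩
    obtain ⟨L, himp, hL⟩ := exists_list_imp_mem_iff r
    refine ⟨L, fun x => ?_, himp, fun i => ?_, ?_⟩
    · simp only [forall_mem_eval_eq_true_iff himp, hL, hf.mem_relOf_iff]
    · obtain ⟨j, -, hij⟩ := hiso i trivial
      simpa only [hL] using ⟨j, hij⟩
    · simp only [hL]
      rintro ⟨i, hi⟩
      exact hf.irrefl_transGen.irrefl i hi

theorem SatisfiesEdgesAt.forall_insertNth_le_iff {r : Fin (k + 1) → Fin (k + 1) → Prop}
    {v : Fin (k + 1)} {c : Bool} (hv : SatisfiesEdgesAt r v c) {x : Fin k → Bool} :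
    (∀ i j, r i j → v.insertNth (α := fun _ => Bool) c x i ≤
      v.insertNth (α := fun _ => Bool) c x j) ↔
      ∀ i j, r (v.succAbove i) (v.succAbove j) → x i ≤ x j := by
  have hout (j : Fin k) (h : r v (v.succAbove j)) : c ≤ x j := hv.1 _ h ▸ Bool.false_le _
  have hin (i : Fin k) (h : r (v.succAbove i) v) : x i ≤ c := hv.2 _ h ▸ Bool.le_true _
  simp only [v.forall_iff_succAbove, Fin.insertNth_apply_same, Fin.insertNth_apply_succAbove,
    le_refl, implies_true, true_and, forall_and]
  exact ⟨fun h => h.2.2, fun h => ⟨hin, hout, h⟩⟩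

theorem IsImpDag.pinC {r : Fin (k + 1) → Fin (k + 1) → Prop} {f : Constraint (k + 1)}
    (hf : IsImpDag r f) {v : Fin (k + 1)} {c : Bool} (hv : SatisfiesEdgesAt r v c) :
    IsImpDag (InvImage r v.succAbove) (pinC f v c) where
  irrefl_transGen := irrefl_transGen_invImage v.succAbove hf.irrefl_transGen
  mem_relOf_iff x := (hf.mem_relOf_iff (v.insertNth c x)).trans hv.forall_insertNth_le_iff

theorem range_succAbove_comp_succAbove (v : Fin (k + 2)) (u : Fin (k + 1)) :
    Set.range (v.succAbove ∘ u.succAbove) = {v, v.succAbove u}ᶜ := by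
  rw [Set.range_comp, Fin.range_succAbove,
    Set.image_compl_eq_range_sdiff_image Fin.succAbove_right_injective, Fin.range_succAbove,
    Set.image_singleton]
  ext
  simp

end Constraint

/-- For a constraint `f` of arity `k ≥ 3` (written `k + 3`), if `R_f` admits a
good factor list, then some constraint in `COMP₁(f) ∪ COMP₂(f)` (a single or a double
pinning of `f`) has an underlying relation admitting a good factor list. -/
theorem stmt18 (k : ℕ) (f : Constraint (k + 3)) (hf : hasGoodFactorList f) :
    (∃ (i : Fin (k + 3)) (c : Bool), hasGoodFactorList (pinC f i c)) ∨
    (∃ (i : Fin (k + 3)) (c : Bool) (i' : Fin (k + 2)) (d : Bool),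
      hasGoodFactorList (pinC (pinC f i c) i' d)) := by
  obtain ⟨r, hr, hiso⟩ := hasGoodFactorList_iff.1 hf
  obtain ⟨v, c, hv, hcompl⟩ | ⟨v, c, u, d, huv, hv, hu, hcompl⟩ :=
    hiso.exists_satisfiesEdgesAt_compl hr.irrefl_transGen
  · rw [← Fin.range_succAbove v, ← noIsolatedOn_invImage_univ] at hcompl
    exact .inl ⟨v, c, hasGoodFactorList_iff.2 ⟨_, hr.pinC hv, hcompl⟩⟩
  · obtain ⟨u, rfl⟩ := Fin.exists_succAbove_eq huv
    rw [← range_succAbove_comp_succAbove, ← noIsolatedOn_invImage_univ] at hcompl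
    exact .inr ⟨v, c, u, d, hasGoodFactorList_iff.2
      ⟨_, (hr.pinC hv).pinC hu.invImage, hcompl⟩⟩
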